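/- arXiv:1709.08618 — 5 statements merged into one kernel-verified Lean document; each statement's English description precedes it below -/
import Mathlib

section
/- Banach–Nečas–Babuška theorem: assume (i) the inf-sup condition: there is c₁ > 0 with sup over v ∈ V, v ≠ 0 of a(u,v)/‖v‖_V ≥ c₁‖u‖_U for every u ∈ U; (ii) continuity: there are c₂, c₃ > 0 with |a(u,v)| ≤ c₂‖u‖_U·‖v‖_V and |F(v)| ≤ c₃‖v‖_V for all u ∈ U, v ∈ V; (iii) injectivity: if v ∈ V satisfies a(u,v) = 0 for all u ∈ U, then v = 0. Then there exists a unique u ∈ U with a(u,v) = F(v) for all v ∈ V, and it satisfies ‖u‖_U ≤ (1/c₁)·‖F‖_{V*}, where ‖F‖_{V*} := sup over v ≠ 0 of F(v)/‖v‖_V. -/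
/-!
The form `a` induces a bounded operator `A : U → V*`, `A u = a(u, ·)`. The inf-sup condition says
that `A` is bounded below, hence `A` is injective and has closed range. If the range were proper,
Hahn–Banach would give a nonzero element of `V**` vanishing on it; by reflexivity it is evaluation
at some `v ≠ 0`, and then `a(·, v) = 0` contradicts injectivity in the second variable.
-/

open Function NormedSpace

theorem antilipschitzWith_inv_of_mul_norm_le {E G 𝓕 : Type*} [SeminormedAddCommGroup E]
    [SeminormedAddCommGroup G] [FunLike 𝓕 E G] [AddMonoidHomClass 𝓕 E G] (T : 𝓕) {c : ℝ}
    (hc : 0 < c) (hT : ∀ x, c * ‖x‖ ≤ ‖T x‖) : AntilipschitzWith (Real.toNNReal c⁻¹) T := by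
  refine AddMonoidHomClass.antilipschitz_of_bound T fun x ↦ ?_
  rw [Real.coe_toNNReal _ (inv_nonneg.2 hc.le)]
  exact (le_inv_mul_iff₀ hc).2 (hT x)

section

variable {𝕜 : Type*} [RCLike 𝕜]

theorem exists_strongDual_apply_ne_zero_of_notMem {E : Type*} [SeminormedAddCommGroup E]
    [NormedSpace 𝕜 E] {p : Submodule 𝕜 E} (hp : IsClosed (p : Set E)) {x : E} (hx : x ∉ p) :
    ∃ f : StrongDual 𝕜 E, f x ≠ 0 ∧ ∀ y ∈ p, f y = 0 := by
  have hmk : p.mkQL x ≠ 0 := by simpa using hx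
  obtain ⟨g, hg⟩ := SeparatingDual.exists_ne_zero (R := 𝕜) hmk
  refine ⟨g.comp p.mkQL, hg, fun y hy ↦ ?_⟩
  have hmk_y : p.mkQL y = 0 := by simpa using hy
  rw [ContinuousLinearMap.comp_apply, hmk_y, map_zero]

theorem sSup_re_apply_div_norm_le_norm {E : Type*} [NormedAddCommGroup E] [NormedSpace 𝕜 E]
    (f : StrongDual 𝕜 E) :
    sSup {r : ℝ | ∃ v : E, v ≠ 0 ∧ r = RCLike.re (f v) / ‖v‖} ≤ ‖f‖ := by
  refine Real.sSup_le ?_ (norm_nonneg f)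
  rintro _ ⟨v, hv, rfl⟩
  rw [div_le_iff₀ (norm_pos_iff.2 hv)]
  exact (RCLike.re_le_norm (f v)).trans (f.le_opNorm v)

theorem submodule_strongDual_eq_top_of_isClosed_of_separatesPoints {V : Type*}
    [NormedAddCommGroup V] [NormedSpace 𝕜 V] (hrefl : Surjective (inclusionInDoubleDual 𝕜 V))
    {p : Submodule 𝕜 (StrongDual 𝕜 V)} (hp : IsClosed (p : Set (StrongDual 𝕜 V)))
    (hsep : ∀ v : V, (∀ f ∈ p, f v = 0) → v = 0) : p = ⊤ := by
  by_contra hne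
  obtain ⟨g, hg⟩ : ∃ g, g ∉ p := by simpa [Submodule.eq_top_iff'] using hne
  obtain ⟨φ, hφg, hφp⟩ := exists_strongDual_apply_ne_zero_of_notMem hp hg
  obtain ⟨v, rfl⟩ := hrefl φ
  simp only [dual_def] at hφg hφp
  exact hφg (by rw [hsep v hφp, map_zero])

theorem bijective_of_antilipschitzWith_of_separatesPoints {U V : Type*} [NormedAddCommGroup U]
    [NormedSpace 𝕜 U] [CompleteSpace U] [NormedAddCommGroup V] [NormedSpace 𝕜 V]
    (hrefl : Surjective (inclusionInDoubleDual 𝕜 V)) {A : U →L[𝕜] StrongDual 𝕜 V} {K : NNReal}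
    (hA : AntilipschitzWith K A) (hsep : ∀ v : V, (∀ u : U, A u v = 0) → v = 0) :
    Bijective A := by
  have hclosed : IsClosed (A.range : Set (StrongDual 𝕜 V)) :=
    hA.isClosed_range A.uniformContinuous
  have hrange : A.range = ⊤ :=
    submodule_strongDual_eq_top_of_isClosed_of_separatesPoints hrefl hclosed
      fun v hv ↦ hsep v fun u ↦ hv (A u) ⟨u, rfl⟩
  exact ⟨hA.injective, LinearMap.range_eq_top.1 hrange⟩

theorem banach_necas_babuska_general
    {U V : Type*} [NormedAddCommGroup U] [NormedSpace 𝕜 U] [CompleteSpace U]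
    [NormedAddCommGroup V] [NormedSpace 𝕜 V]
    (hrefl : Surjective (inclusionInDoubleDual 𝕜 V))
    (a : U →ₗ[𝕜] V →ₗ[𝕜] 𝕜) (F : V →ₗ[𝕜] 𝕜) {c₁ : ℝ} (hc₁ : 0 < c₁)
    (hinfsup : ∀ u : U,
      c₁ * ‖u‖ ≤ sSup {r : ℝ | ∃ v : V, v ≠ 0 ∧ r = RCLike.re (a u v) / ‖v‖})
    {c₂ c₃ : ℝ} (hconta : ∀ (u : U) (v : V), ‖a u v‖ ≤ c₂ * ‖u‖ * ‖v‖)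
    (hcontF : ∀ v : V, ‖F v‖ ≤ c₃ * ‖v‖)
    (hinj : ∀ v : V, (∀ u : U, a u v = 0) → v = 0) :
    (∃! u : U, ∀ v : V, a u v = F v) ∧
      ∀ u : U, (∀ v : V, a u v = F v) →
        ‖u‖ ≤ (1 / c₁) * sSup {r : ℝ | ∃ v : V, v ≠ 0 ∧ r = RCLike.re (F v) / ‖v‖} := by
  let A : U →L[𝕜] StrongDual 𝕜 V := a.mkContinuous₂ c₂ hconta
  let G : StrongDual 𝕜 V := F.mkContinuous c₃ hcontF
  have hbelow : ∀ u, c₁ * ‖u‖ ≤ ‖A u‖ := fun u ↦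
    (hinfsup u).trans (sSup_re_apply_div_norm_le_norm (A u))
  have hbij : Bijective A := bijective_of_antilipschitzWith_of_separatesPoints hrefl
    (antilipschitzWith_inv_of_mul_norm_le A hc₁ hbelow) hinj
  have heq_iff : ∀ u, A u = G ↔ ∀ v, a u v = F v := fun u ↦ ContinuousLinearMap.ext_iff
  refine ⟨by simpa only [heq_iff] using hbij.existsUnique G, fun u hu ↦ ?_⟩
  rw [one_div, le_inv_mul_iff₀ hc₁]
  simpa only [hu] using hinfsup u

end

/-- **Banach–Nečas–Babuška theorem.** Let `U` be a Banach space, `V` a reflexive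
Banach space, `a : U × V → ℝ` a bilinear form and `F` a linear functional on `V`
satisfying (i) the inf-sup condition with constant `c₁ > 0`, (ii) continuity of `a`
and `F`, and (iii) injectivity: `a(u,v) = 0` for all `u` implies `v = 0`. Then there
is a unique `u ∈ U` with `a(u,v) = F(v)` for all `v ∈ V`, and it satisfies
`‖u‖ ≤ (1/c₁)·‖F‖_{V*}` with `‖F‖_{V*} = sup_{v ≠ 0} F v / ‖v‖`. -/
theorem banach_necas_babuska
    {U V : Type*} [NormedAddCommGroup U] [NormedSpace ℝ U] [CompleteSpace U]
    [NormedAddCommGroup V] [NormedSpace ℝ V] [CompleteSpace V]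
    (hrefl : Function.Surjective (NormedSpace.inclusionInDoubleDual ℝ V))
    (a : U →ₗ[ℝ] V →ₗ[ℝ] ℝ) (F : V →ₗ[ℝ] ℝ)
    (c₁ : ℝ) (hc₁ : 0 < c₁)
    (hinfsup : ∀ u : U,
      c₁ * ‖u‖ ≤ sSup {r : ℝ | ∃ v : V, v ≠ 0 ∧ r = a u v / ‖v‖})
    (c₂ c₃ : ℝ) (hc₂ : 0 < c₂) (hc₃ : 0 < c₃)
    (hconta : ∀ (u : U) (v : V), |a u v| ≤ c₂ * ‖u‖ * ‖v‖)
    (hcontF : ∀ v : V, |F v| ≤ c₃ * ‖v‖)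
    (hinj : ∀ v : V, (∀ u : U, a u v = 0) → v = 0) :
    (∃! u : U, ∀ v : V, a u v = F v) ∧
      ∀ u : U, (∀ v : V, a u v = F v) →
        ‖u‖ ≤ (1 / c₁) * sSup {r : ℝ | ∃ v : V, v ≠ 0 ∧ r = F v / ‖v‖} :=
  banach_necas_babuska_general hrefl a F hc₁ hinfsup hconta hcontF hinj
end

section
/- Discrete Banach–Nečas–Babuška theorem: assume (i) the discrete inf-sup condition: there is c₁ > 0 with sup over v_h ∈ V_h, v_h ≠ 0 of a_h(u_h,v_h)/‖v_h‖ ≥ c₁‖u_h‖ for every u_h ∈ U_h; (ii) continuity: there are c₂, c₃ > 0 with |a_h(u_h,v_h)| ≤ c₂‖u_h‖·‖v_h‖ and |F_h(v_h)| ≤ c₃‖v_h‖ for all u_h ∈ U_h, v_h ∈ V_h. Then there exists a unique u_h ∈ U_h with a_h(u_h,v_h) = F_h(v_h) for all v_h ∈ V_h, and it satisfies ‖u_h‖ ≤ (1/c₁)·sup over v_h ≠ 0 of F_h(v_h)/‖v_h‖. -/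
/-!
The inf-sup condition bounds `c₁ ‖u‖` by the dual norm of `a u`. Hence `a u = 0` forces `u = 0`,
so `a : U → V*` is injective, and `dim U = dim V = dim V*` makes it bijective. The stability
estimate is the inf-sup inequality at the solution, where `a u = F`.
-/

section InfSup

variable {U V : Type*} [NormedAddCommGroup U] [NormedSpace ℝ U]
  [NormedAddCommGroup V] [NormedSpace ℝ V]

/-- The dual norm `sup_{v ≠ 0} f v / ‖v‖` of a linear functional, which measures the data in the
stability estimate. No absolute value is needed, as `v` may be replaced by `-v`. As a supremum of
reals it is `0` when `V` is trivial, and also, by convention, when `f` is unbounded. -/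
noncomputable def dualNorm (f : V →ₗ[ℝ] ℝ) : ℝ :=
  sSup {r : ℝ | ∃ v : V, v ≠ 0 ∧ r = f v / ‖v‖}

/-- The inf-sup condition with constant `c` for a bilinear form `a`, encoded as a map into the
algebraic dual: `u ↦ a u` is bounded below by `c` in the dual norm. It replaces coercivity as the
source of uniqueness and stability. -/
def InfSupCondition (a : U →ₗ[ℝ] V →ₗ[ℝ] ℝ) (c : ℝ) : Prop :=
  ∀ u : U, c * ‖u‖ ≤ dualNorm (a u)

theorem dualNorm_zero : dualNorm (0 : V →ₗ[ℝ] ℝ) = 0 := by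
  have hquot : ∀ r ∈ {r : ℝ | ∃ v : V, v ≠ 0 ∧ r = (0 : V →ₗ[ℝ] ℝ) v / ‖v‖}, r = 0 := by
    rintro r ⟨v, -, rfl⟩
    simp
  exact le_antisymm (Real.sSup_nonpos fun r hr ↦ (hquot r hr).le)
    (Real.sSup_nonneg fun r hr ↦ (hquot r hr).ge)

namespace InfSupCondition

variable {a : U →ₗ[ℝ] V →ₗ[ℝ] ℝ} {c : ℝ}

theorem norm_le (h : InfSupCondition a c) (hc : 0 < c) (u : U) :
    ‖u‖ ≤ 1 / c * dualNorm (a u) := by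
  rw [one_div, le_inv_mul_iff₀ hc]
  exact h u

theorem injective (h : InfSupCondition a c) (hc : 0 < c) : Function.Injective a := by
  refine (injective_iff_map_eq_zero a).mpr fun u hu ↦ norm_le_zero_iff.mp ?_
  calc
    ‖u‖ ≤ 1 / c * dualNorm (a u) := h.norm_le hc u
    _ = 0 := by rw [hu, dualNorm_zero, mul_zero]

theorem bijective_of_finrank_eq [FiniteDimensional ℝ U] [FiniteDimensional ℝ V]
    (h : InfSupCondition a c) (hc : 0 < c) (hdim : Module.finrank ℝ U = Module.finrank ℝ V) :
    Function.Bijective a := by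
  have hdual : Module.finrank ℝ U = Module.finrank ℝ (Module.Dual ℝ V) :=
    hdim.trans Subspace.dual_finrank_eq.symm
  have hinj : Function.Injective a := h.injective hc
  exact ⟨hinj, (LinearMap.injective_iff_surjective_of_finrank_eq_finrank hdual).mp hinj⟩

end InfSupCondition

end InfSup

/-- **Discrete Banach–Nečas–Babuška theorem.** Let `U_h` and `V_h` be
finite-dimensional normed spaces of the same dimension, `a_h` a bilinear form and
`F_h` a linear functional satisfying (i) the discrete inf-sup condition with constant
`c₁ > 0` and (ii) continuity. Then there is a unique `u_h ∈ U_h` with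
`a_h(u_h, v_h) = F_h(v_h)` for all `v_h ∈ V_h`, and it satisfies
`‖u_h‖ ≤ (1/c₁)·sup_{v_h ≠ 0} F_h v_h / ‖v_h‖`. -/
theorem discrete_banach_necas_babuska
    {Uh Vh : Type*} [NormedAddCommGroup Uh] [NormedSpace ℝ Uh]
    [NormedAddCommGroup Vh] [NormedSpace ℝ Vh]
    [FiniteDimensional ℝ Uh] [FiniteDimensional ℝ Vh]
    (hdim : Module.finrank ℝ Uh = Module.finrank ℝ Vh)
    (ah : Uh →ₗ[ℝ] Vh →ₗ[ℝ] ℝ) (Fh : Vh →ₗ[ℝ] ℝ)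
    (c₁ : ℝ) (hc₁ : 0 < c₁)
    (hinfsup : ∀ uh : Uh,
      c₁ * ‖uh‖ ≤ sSup {r : ℝ | ∃ vh : Vh, vh ≠ 0 ∧ r = ah uh vh / ‖vh‖})
    (c₂ c₃ : ℝ) (hc₂ : 0 < c₂) (hc₃ : 0 < c₃)
    (hconta : ∀ (uh : Uh) (vh : Vh), |ah uh vh| ≤ c₂ * ‖uh‖ * ‖vh‖)
    (hcontF : ∀ vh : Vh, |Fh vh| ≤ c₃ * ‖vh‖) :
    (∃! uh : Uh, ∀ vh : Vh, ah uh vh = Fh vh) ∧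
      ∀ uh : Uh, (∀ vh : Vh, ah uh vh = Fh vh) →
        ‖uh‖ ≤ (1 / c₁) * sSup {r : ℝ | ∃ vh : Vh, vh ≠ 0 ∧ r = Fh vh / ‖vh‖} := by
  have hinfsup' : InfSupCondition ah c₁ := hinfsup
  simp only [← LinearMap.ext_iff]
  refine ⟨(hinfsup'.bijective_of_finrank_eq hc₁ hdim).existsUnique Fh, ?_⟩
  rintro uh rfl
  exact hinfsup'.norm_le hc₁ uh
end

section
/- Second Strang lemma: for every w_h ∈ U_h one has ‖u − u_h‖ ≤ (1 + c₄/c₁)·‖u − w_h‖ + (1/c₁)·sup over v_h ∈ V_h, v_h ≠ 0 of |F_h(v_h) − a_h(u,v_h)|/‖v_h‖. Consequently ‖u − u_h‖ ≤ (1 + c₄/c₁)·inf over w_h ∈ U_h of ‖u − w_h‖ + (1/c₁)·sup over v_h ≠ 0 of |F_h(v_h) − a_h(u,v_h)|/‖v_h‖. -/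
/-!
View the form as the map `A : x ↦ a_h(x, ·)` from `X` into the dual of `V_h`. Continuity says that
`A` is bounded by `c₄`, the inf-sup condition that `A` is bounded below by `c₁` on `U_h`, and the
consistency term is the dual norm of `A u_h - A u`. The estimate then follows from two triangle
inequalities, for `u - u_h = (u - w_h) - (u_h - w_h)` in `X` and for
`A (u_h - w_h) = A (u - w_h) + (A u_h - A u)` in the dual.
-/

theorem norm_sub_le_of_bounded_below_on {X Y : Type*} [SeminormedAddCommGroup X]
    [SeminormedAddCommGroup Y] {U : AddSubgroup X} {A : X →+ Y} {c C : ℝ} (hc : 0 < c)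
    (hbelow : ∀ w ∈ U, c * ‖w‖ ≤ ‖A w‖) (hbound : ∀ x, ‖A x‖ ≤ C * ‖x‖) (u : X) {uh wh : X}
    (huh : uh ∈ U) (hwh : wh ∈ U) :
    ‖u - uh‖ ≤ (1 + C / c) * ‖u - wh‖ + (1 / c) * ‖A uh - A u‖ := by
  have discrete_error : c * ‖uh - wh‖ ≤ C * ‖u - wh‖ + ‖A uh - A u‖ :=
    calc c * ‖uh - wh‖ ≤ ‖A (uh - wh)‖ := hbelow _ (U.sub_mem huh hwh)
      _ = ‖A (u - wh) + (A uh - A u)‖ := by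
        rw [map_sub, map_sub, add_comm, sub_add_sub_cancel]
      _ ≤ ‖A (u - wh)‖ + ‖A uh - A u‖ := norm_add_le _ _
      _ ≤ C * ‖u - wh‖ + ‖A uh - A u‖ := by gcongr; exact hbound _
  calc ‖u - uh‖ ≤ ‖u - wh‖ + ‖uh - wh‖ := by
        simpa only [sub_sub_sub_cancel_right] using norm_sub_le (u - wh) (uh - wh)
    _ ≤ ‖u - wh‖ + (C * ‖u - wh‖ + ‖A uh - A u‖) / c := by
        gcongr
        rwa [le_div_iff₀' hc]
    _ = (1 + C / c) * ‖u - wh‖ + (1 / c) * ‖A uh - A u‖ := by ring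

theorem le_mul_sInf_add {s : Set ℝ} (hs : s.Nonempty) {K b d : ℝ} (hK : 0 < K)
    (h : ∀ r ∈ s, b ≤ K * r + d) : b ≤ K * sInf s + d := by
  have quotient_le_sInf : (b - d) / K ≤ sInf s :=
    le_csInf hs fun r hr ↦ by
      rw [div_le_iff₀' hK, sub_le_iff_le_add]
      exact h r hr
  rwa [div_le_iff₀' hK, sub_le_iff_le_add] at quotient_le_sInf

theorem sSup_div_norm_le_sSup_abs_div_norm {V : Type*} [NormedAddGroup V] {f : V → ℝ} {C : ℝ}
    (hf : ∀ v, |f v| ≤ C * ‖v‖) :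
    sSup {r : ℝ | ∃ v : V, v ≠ 0 ∧ r = f v / ‖v‖} ≤
      sSup {r : ℝ | ∃ v : V, v ≠ 0 ∧ r = |f v| / ‖v‖} := by
  have bddAbove_ratios : BddAbove {r : ℝ | ∃ v : V, v ≠ 0 ∧ r = |f v| / ‖v‖} := by
    refine ⟨C, ?_⟩
    rintro _ ⟨v, hv, rfl⟩
    exact (div_le_iff₀ (norm_pos_iff.mpr hv)).mpr (hf v)
  refine Real.sSup_le ?_ (Real.sSup_nonneg ?_)
  · rintro _ ⟨v, hv, rfl⟩
    calc f v / ‖v‖ ≤ |f v| / ‖v‖ := by gcongr; exact le_abs_self _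
      _ ≤ _ := le_csSup bddAbove_ratios ⟨v, hv, rfl⟩
  · rintro _ ⟨v, -, rfl⟩
    positivity

theorem sSup_norm_div_norm_eq_opNorm {𝕜 𝕜₂ V W : Type*} [NontriviallyNormedField 𝕜]
    [NontriviallyNormedField 𝕜₂] [NormedAddCommGroup V] [NormedSpace 𝕜 V]
    [SeminormedAddCommGroup W] [NormedSpace 𝕜₂ W] {σ : 𝕜 →+* 𝕜₂} [RingHomIsometric σ]
    (f : V →SL[σ] W) :
    sSup {r : ℝ | ∃ v : V, v ≠ 0 ∧ r = ‖f v‖ / ‖v‖} = ‖f‖ := by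
  have ratio_le : ∀ r ∈ {r : ℝ | ∃ v : V, v ≠ 0 ∧ r = ‖f v‖ / ‖v‖}, r ≤ ‖f‖ := by
    rintro _ ⟨v, -, rfl⟩
    exact f.ratio_le_opNorm v
  refine le_antisymm (Real.sSup_le ratio_le (norm_nonneg f)) (f.opNorm_le_bound' ?_ ?_)
  · refine Real.sSup_nonneg ?_
    rintro _ ⟨v, -, rfl⟩
    positivity
  · intro v hv
    rw [← div_le_iff₀ (lt_of_le_of_ne' (norm_nonneg v) hv)]
    exact le_csSup ⟨‖f‖, ratio_le⟩ ⟨v, norm_ne_zero_iff.mp hv, rfl⟩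

/- Sesquilinear forms over `ℂ` are the case where `σ` is complex conjugation. -/
theorem second_strang_lemma_general
    {𝕜 X Vh : Type*} [NontriviallyNormedField 𝕜] {σ : 𝕜 →+* 𝕜} [RingHomIsometric σ]
    [SeminormedAddCommGroup X] [NormedSpace 𝕜 X] [NormedAddCommGroup Vh] [NormedSpace 𝕜 Vh]
    (Uh : Submodule 𝕜 X) (ah : X →ₗ[𝕜] Vh →ₛₗ[σ] 𝕜) (Fh : Vh →ₛₗ[σ] 𝕜)
    {c₁ : ℝ} (hc₁ : 0 < c₁)
    (hinfsup : ∀ uh ∈ Uh,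
      c₁ * ‖uh‖ ≤ sSup {r : ℝ | ∃ vh : Vh, vh ≠ 0 ∧ r = ‖ah uh vh‖ / ‖vh‖})
    {c₄ : ℝ} (hc₄ : 0 ≤ c₄)
    (hcont : ∀ (x : X) (vh : Vh), ‖ah x vh‖ ≤ c₄ * ‖x‖ * ‖vh‖)
    (u : X) {uh : X} (huhmem : uh ∈ Uh) (huh : ∀ vh : Vh, ah uh vh = Fh vh) :
    (∀ wh ∈ Uh,
      ‖u - uh‖ ≤ (1 + c₄ / c₁) * ‖u - wh‖
        + (1 / c₁) * sSup {r : ℝ | ∃ vh : Vh, vh ≠ 0 ∧ r = ‖Fh vh - ah u vh‖ / ‖vh‖}) ∧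
    ‖u - uh‖ ≤
      (1 + c₄ / c₁) * sInf {s : ℝ | ∃ wh ∈ Uh, s = ‖u - wh‖}
      + (1 / c₁) * sSup {r : ℝ | ∃ vh : Vh, vh ≠ 0 ∧ r = ‖Fh vh - ah u vh‖ / ‖vh‖} := by
  let A : X →L[𝕜] Vh →SL[σ] 𝕜 := ah.mkContinuous₂ c₄ hcont
  have bounded_below : ∀ w ∈ Uh, c₁ * ‖w‖ ≤ ‖A w‖ := fun w hw ↦
    (hinfsup w hw).trans_eq (sSup_norm_div_norm_eq_opNorm (A w))
  have bounded : ∀ x, ‖A x‖ ≤ c₄ * ‖x‖ :=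
    A.le_of_opNorm_le (ah.mkContinuous₂_norm_le hc₄ hcont)
  have consistency_error :
      sSup {r : ℝ | ∃ vh : Vh, vh ≠ 0 ∧ r = ‖Fh vh - ah u vh‖ / ‖vh‖} = ‖A uh - A u‖ := by
    simp only [← huh]
    exact sSup_norm_div_norm_eq_opNorm (A uh - A u)
  rw [consistency_error]
  have quasi_optimal : ∀ wh ∈ Uh,
      ‖u - uh‖ ≤ (1 + c₄ / c₁) * ‖u - wh‖ + (1 / c₁) * ‖A uh - A u‖ := fun wh hwh ↦
    norm_sub_le_of_bounded_below_on (U := Uh.toAddSubgroup) (A := (A : X →+ Vh →SL[σ] 𝕜))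
      hc₁ bounded_below bounded u huhmem hwh
  refine ⟨quasi_optimal, le_mul_sInf_add ?_ (by positivity) ?_⟩
  · exact ⟨‖u - uh‖, uh, huhmem, rfl⟩
  · rintro _ ⟨wh, hwh, rfl⟩
    exact quasi_optimal wh hwh

/-- **Second Strang lemma.** Let `X` be a normed space (representing `U(h)`),
`U_h ⊆ X` a subspace, `V_h` a normed space, and `a_h : X × V_h → ℝ` a bilinear form
satisfying the discrete inf-sup condition on `U_h` with constant `c₁ > 0` and the
bound `|a_h(x, v_h)| ≤ c₄‖x‖‖v_h‖`. If `u_h ∈ U_h` solves the discrete problem, then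
for every `w_h ∈ U_h`,
`‖u − u_h‖ ≤ (1 + c₄/c₁)‖u − w_h‖ + (1/c₁)·sup_{v_h ≠ 0} |F_h v_h − a_h(u, v_h)|/‖v_h‖`,
and consequently the same bound holds with the infimum over `w_h ∈ U_h`. -/
theorem second_strang_lemma
    {X Vh : Type*} [NormedAddCommGroup X] [NormedSpace ℝ X]
    [NormedAddCommGroup Vh] [NormedSpace ℝ Vh]
    (Uh : Submodule ℝ X)
    (ah : X →ₗ[ℝ] Vh →ₗ[ℝ] ℝ) (Fh : Vh →ₗ[ℝ] ℝ)
    (c₁ : ℝ) (hc₁ : 0 < c₁)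
    (hinfsup : ∀ uh ∈ Uh,
      c₁ * ‖uh‖ ≤ sSup {r : ℝ | ∃ vh : Vh, vh ≠ 0 ∧ r = ah uh vh / ‖vh‖})
    (c₄ : ℝ) (hc₄ : 0 < c₄)
    (hcont : ∀ (x : X) (vh : Vh), |ah x vh| ≤ c₄ * ‖x‖ * ‖vh‖)
    (u : X)
    (uh : X) (huhmem : uh ∈ Uh) (huh : ∀ vh : Vh, ah uh vh = Fh vh) :
    (∀ wh ∈ Uh,
      ‖u - uh‖ ≤ (1 + c₄ / c₁) * ‖u - wh‖
        + (1 / c₁) * sSup {r : ℝ | ∃ vh : Vh, vh ≠ 0 ∧ r = |Fh vh - ah u vh| / ‖vh‖}) ∧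
    ‖u - uh‖ ≤
      (1 + c₄ / c₁) * sInf {s : ℝ | ∃ wh ∈ Uh, s = ‖u - wh‖}
      + (1 / c₁) * sSup {r : ℝ | ∃ vh : Vh, vh ≠ 0 ∧ r = |Fh vh - ah u vh| / ‖vh‖} :=
  second_strang_lemma_general Uh ah Fh hc₁
    (fun w hw ↦ (hinfsup w hw).trans (sSup_div_norm_le_sSup_abs_div_norm (hcont w)))
    hc₄.le hcont u huhmem huh
end

section
/- Fortin criterion: assume the LBB condition holds, i.e. there is β > 0 with sup over v ∈ V, v ≠ 0 of b(v,μ)/‖v‖_V ≥ β‖μ‖_M for all μ ∈ M. Then the discrete LBB condition (there exists β_h > 0 with sup over v_h ∈ V_h, v_h ≠ 0 of b(v_h,μ_h)/‖v_h‖_V ≥ β_h‖μ_h‖_M for all μ_h ∈ M_h) holds if and only if there exists a linear operator Π_h : V → V_h and a constant γ_h > 0 such that b(Π_h v, μ_h) = b(v, μ_h) for all v ∈ V and all μ_h ∈ M_h, and ‖Π_h v‖_V ≤ γ_h‖v‖_V for all v ∈ V. In particular, if such Π_h exists then the discrete LBB condition holds with constant β/γ_h. -/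
/-!
The supremum of `b(v, μ) / ‖v‖` over `v ≠ 0` is the norm of the functional `b(·, μ)`, so the LBB
condition says that `μ ↦ b(·, μ)` is bounded below.

A Fortin operator `Π` turns `b(·, μ_h)` on `V` into the restriction of `b(·, μ_h)` to `V_h` composed
with `Π`, so passing to `V_h` shrinks the norm of this functional by a factor of at most `γ_h`.
Conversely, the discrete LBB condition makes `μ_h ↦ b(·, μ_h)` injective; as `M_h` is
finite-dimensional, the adjoint map `V_h → M_h*` is then onto and has a bounded right inverse, and
`Π` is this right inverse composed with `V → M_h*`, `v ↦ b(v, ·)`.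
-/

open Function

theorem sSup_apply_div_norm_eq_opNorm {E : Type*} [NormedAddCommGroup E] [NormedSpace ℝ E]
    (f : E →L[ℝ] ℝ) : sSup {r : ℝ | ∃ v : E, v ≠ 0 ∧ r = f v / ‖v‖} = ‖f‖ := by
  set S : Set ℝ := {r | ∃ v : E, v ≠ 0 ∧ r = f v / ‖v‖}
  have le_norm : ∀ r ∈ S, r ≤ ‖f‖ := by
    rintro _ ⟨v, -, rfl⟩
    exact (Real.le_norm_self _).trans (by simpa using f.ratio_le_opNorm v)
  refine le_antisymm (Real.sSup_le le_norm (norm_nonneg f)) ?_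
  have apply_le (v : E) : f v ≤ sSup S * ‖v‖ := by
    rcases eq_or_ne v 0 with rfl | hv
    · simp
    · exact (div_le_iff₀ (norm_pos_iff.mpr hv)).mp (le_csSup ⟨‖f‖, le_norm⟩ ⟨v, hv, rfl⟩)
  have abs_apply_le (v : E) : |f v| ≤ sSup S * ‖v‖ :=
    abs_le'.mpr ⟨apply_le v, by simpa using apply_le (-v)⟩
  rcases subsingleton_or_nontrivial E with _ | _
  · rw [f.opNorm_subsingleton]
    exact Real.sSup_nonneg fun r ⟨v, hv, _⟩ ↦ absurd (Subsingleton.elim v 0) hv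
  · obtain ⟨v, hv⟩ := exists_ne (0 : E)
    have sSup_nonneg : 0 ≤ sSup S :=
      nonneg_of_mul_nonneg_left ((abs_nonneg _).trans (abs_apply_le v)) (norm_pos_iff.mpr hv)
    exact f.opNorm_le_bound sSup_nonneg abs_apply_le

section

variable {𝕜 V W M N : Type*} [NontriviallyNormedField 𝕜]
  [SeminormedAddCommGroup V] [NormedSpace 𝕜 V] [SeminormedAddCommGroup W] [NormedSpace 𝕜 W]

/-- The Ladyzhenskaya–Babuška–Brezzi (inf-sup) condition with constant `β` for a continuous bilinear
form `B`. The supremum of `B v μ / ‖v‖` over `v ≠ 0` is expressed as the operator norm of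
`B.flip μ = B(·, μ)`, which makes sense over any normed field. -/
def SatisfiesLBB [SeminormedAddCommGroup M] [NormedSpace 𝕜 M]
    (B : V →L[𝕜] M →L[𝕜] 𝕜) (β : ℝ) : Prop :=
  ∀ μ : M, β * ‖μ‖ ≤ ‖B.flip μ‖

theorem SatisfiesLBB.comp_linearIsometry
    [SeminormedAddCommGroup M] [NormedSpace 𝕜 M] [SeminormedAddCommGroup N] [NormedSpace 𝕜 N]
    {B : V →L[𝕜] M →L[𝕜] 𝕜} {β : ℝ} (hB : SatisfiesLBB B β) (ι : N →ₗᵢ[𝕜] M) :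
    SatisfiesLBB (B.flip ∘L ι.toContinuousLinearMap).flip β := fun ν ↦ by
  simpa using hB (ι ν)

theorem SatisfiesLBB.of_fortin_operator [SeminormedAddCommGroup N] [NormedSpace 𝕜 N]
    {B : V →L[𝕜] N →L[𝕜] 𝕜} {Bh : W →L[𝕜] N →L[𝕜] 𝕜} {β γ : ℝ} (hB : SatisfiesLBB B β)
    (P : V → W) (hγ : 0 < γ) (hP : ∀ v ν, Bh (P v) ν = B v ν) (hPγ : ∀ v, ‖P v‖ ≤ γ * ‖v‖) :
    SatisfiesLBB Bh (β / γ) := fun ν ↦ by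
  have opNorm_le : ‖B.flip ν‖ ≤ ‖Bh.flip ν‖ * γ := by
    refine ContinuousLinearMap.opNorm_le_bound _ (by positivity) fun v ↦ ?_
    calc ‖B.flip ν v‖ = ‖Bh.flip ν (P v)‖ := by simp [hP]
      _ ≤ ‖Bh.flip ν‖ * ‖P v‖ := (Bh.flip ν).le_opNorm _
      _ ≤ ‖Bh.flip ν‖ * (γ * ‖v‖) := by gcongr; exact hPγ v
      _ = ‖Bh.flip ν‖ * γ * ‖v‖ := by ring
  rw [div_mul_eq_mul_div, div_le_iff₀ hγ]
  exact (hB ν).trans opNorm_le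

variable [NormedAddCommGroup N] [NormedSpace 𝕜 N]

theorem SatisfiesLBB.flip_injective {B : W →L[𝕜] N →L[𝕜] 𝕜} {β : ℝ}
    (hB : SatisfiesLBB B β) (hβ : 0 < β) : Injective B.flip := by
  refine (injective_iff_map_eq_zero _).mpr fun ν hν ↦ norm_le_zero_iff.mp ?_
  exact nonpos_of_mul_nonpos_right (by simpa [hν] using hB ν) hβ

variable [FiniteDimensional 𝕜 N]

theorem surjective_of_flip_injective {B : W →L[𝕜] N →L[𝕜] 𝕜} (hB : Injective B.flip) :
    Surjective B := by
  let T : W →ₗ[𝕜] Module.Dual 𝕜 N := ContinuousLinearMap.coeLM 𝕜 ∘ₗ B.toLinearMap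
  have T_flip_injective : Injective T.flip := fun μ ν h ↦
    hB (ContinuousLinearMap.ext fun w ↦ LinearMap.congr_fun h w)
  have T_surjective : Surjective T := LinearMap.flip_injective_iff₂.mp T_flip_injective
  exact Surjective.of_comp_left (f := ContinuousLinearMap.toLinearMap) T_surjective
    ContinuousLinearMap.coe_injective

theorem SatisfiesLBB.exists_fortin_operator [CompleteSpace 𝕜] {Bh : W →L[𝕜] N →L[𝕜] 𝕜} {β : ℝ}
    (hBh : SatisfiesLBB Bh β) (hβ : 0 < β) (B : V →L[𝕜] N →L[𝕜] 𝕜) :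
    ∃ P : V →L[𝕜] W, ∀ v ν, Bh (P v) ν = B v ν := by
  have Bh_surjective : Surjective Bh := surjective_of_flip_injective (hBh.flip_injective hβ)
  obtain ⟨R, hR⟩ := Bh.exists_rightInverse_of_surjective (LinearMap.range_eq_top.mpr Bh_surjective)
  exact ⟨R ∘L B, fun v ν ↦ DFunLike.congr_fun (DFunLike.congr_fun hR (B v)) ν⟩

end

theorem fortin_criterion_general
    {V M : Type*} [NormedAddCommGroup V] [NormedSpace ℝ V]
    [NormedAddCommGroup M] [NormedSpace ℝ M]
    (b : V →ₗ[ℝ] M →ₗ[ℝ] ℝ)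
    (Cb : ℝ) (hCb : ∀ (v : V) (μ : M), |b v μ| ≤ Cb * ‖v‖ * ‖μ‖)
    (Vh : Submodule ℝ V) (Mh : Submodule ℝ M)
    [FiniteDimensional ℝ Mh]
    (β : ℝ) (hβ : 0 < β)
    (hLBB : ∀ μ : M, β * ‖μ‖ ≤ sSup {r : ℝ | ∃ v : V, v ≠ 0 ∧ r = b v μ / ‖v‖}) :
    ((∃ βh : ℝ, 0 < βh ∧ ∀ μh : Mh,
        βh * ‖μh‖ ≤ sSup {r : ℝ | ∃ vh : Vh, vh ≠ 0 ∧ r = b (vh : V) (μh : M) / ‖vh‖}) ↔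
      (∃ (Pih : V →ₗ[ℝ] Vh) (γh : ℝ), 0 < γh ∧
        (∀ (v : V) (μh : Mh), b (Pih v : V) (μh : M) = b v (μh : M)) ∧
        (∀ v : V, ‖Pih v‖ ≤ γh * ‖v‖))) ∧
    (∀ (Pih : V →ₗ[ℝ] Vh) (γh : ℝ), 0 < γh →
      (∀ (v : V) (μh : Mh), b (Pih v : V) (μh : M) = b v (μh : M)) →
      (∀ v : V, ‖Pih v‖ ≤ γh * ‖v‖) →
      ∀ μh : Mh,
        (β / γh) * ‖μh‖ ≤
          sSup {r : ℝ | ∃ vh : Vh, vh ≠ 0 ∧ r = b (vh : V) (μh : M) / ‖vh‖}) := by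
  let B : V →L[ℝ] M →L[ℝ] ℝ := b.mkContinuous₂ Cb hCb
  let B_Mh : V →L[ℝ] Mh →L[ℝ] ℝ := (B.flip ∘L Mh.subtypeₗᵢ.toContinuousLinearMap).flip
  let Bh : Vh →L[ℝ] Mh →L[ℝ] ℝ := B_Mh ∘L Vh.subtypeL
  have B_Mh_LBB : SatisfiesLBB B_Mh β :=
    SatisfiesLBB.comp_linearIsometry
      (fun μ ↦ (hLBB μ).trans_eq (sSup_apply_div_norm_eq_opNorm (B.flip μ))) Mh.subtypeₗᵢ
  have Bh_LBB_iff (βh : ℝ) : SatisfiesLBB Bh βh ↔ ∀ μh : Mh, βh * ‖μh‖ ≤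
      sSup {r : ℝ | ∃ vh : Vh, vh ≠ 0 ∧ r = b (vh : V) (μh : M) / ‖vh‖} :=
    forall_congr' fun μh ↦ by rw [← sSup_apply_div_norm_eq_opNorm]; rfl
  simp only [← Bh_LBB_iff]
  refine ⟨⟨?_, ?_⟩, fun P γ hγ hP hPγ ↦ B_Mh_LBB.of_fortin_operator P hγ hP hPγ⟩
  · rintro ⟨βh, hβh, hBh⟩
    obtain ⟨P, hP⟩ := hBh.exists_fortin_operator hβh B_Mh
    obtain ⟨γ, hγ, hPγ⟩ := P.bound
    exact ⟨P, γ, hγ, hP, hPγ⟩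
  · rintro ⟨P, γ, hγ, hP, hPγ⟩
    exact ⟨β / γ, div_pos hβ hγ, B_Mh_LBB.of_fortin_operator P hγ hP hPγ⟩

/-- **Fortin criterion.** Assume the LBB condition holds with constant `β > 0`. Then
the discrete LBB condition holds (for some `β_h > 0`) if and only if there exist a
linear operator `Π_h : V → V_h` and `γ_h > 0` with `b(Π_h v, μ_h) = b(v, μ_h)` for
all `v ∈ V`, `μ_h ∈ M_h`, and `‖Π_h v‖ ≤ γ_h‖v‖` for all `v ∈ V`. In particular, if
such a `Π_h` exists then the discrete LBB condition holds with constant `β/γ_h`. -/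
theorem fortin_criterion
    {V M : Type*} [NormedAddCommGroup V] [NormedSpace ℝ V] [CompleteSpace V]
    [NormedAddCommGroup M] [NormedSpace ℝ M] [CompleteSpace M]
    (hreflV : Function.Surjective (NormedSpace.inclusionInDoubleDual ℝ V))
    (hreflM : Function.Surjective (NormedSpace.inclusionInDoubleDual ℝ M))
    (b : V →ₗ[ℝ] M →ₗ[ℝ] ℝ)
    (Cb : ℝ) (hCb : ∀ (v : V) (μ : M), |b v μ| ≤ Cb * ‖v‖ * ‖μ‖)
    (Vh : Submodule ℝ V) (Mh : Submodule ℝ M)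
    [FiniteDimensional ℝ Vh] [FiniteDimensional ℝ Mh]
    (β : ℝ) (hβ : 0 < β)
    (hLBB : ∀ μ : M, β * ‖μ‖ ≤ sSup {r : ℝ | ∃ v : V, v ≠ 0 ∧ r = b v μ / ‖v‖}) :
    ((∃ βh : ℝ, 0 < βh ∧ ∀ μh : Mh,
        βh * ‖μh‖ ≤ sSup {r : ℝ | ∃ vh : Vh, vh ≠ 0 ∧ r = b (vh : V) (μh : M) / ‖vh‖}) ↔
      (∃ (Pih : V →ₗ[ℝ] Vh) (γh : ℝ), 0 < γh ∧
        (∀ (v : V) (μh : Mh), b (Pih v : V) (μh : M) = b v (μh : M)) ∧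
        (∀ v : V, ‖Pih v‖ ≤ γh * ‖v‖))) ∧
    (∀ (Pih : V →ₗ[ℝ] Vh) (γh : ℝ), 0 < γh →
      (∀ (v : V) (μh : Mh), b (Pih v : V) (μh : M) = b v (μh : M)) →
      (∀ v : V, ‖Pih v‖ ≤ γh * ‖v‖) →
      ∀ μh : Mh,
        (β / γh) * ‖μh‖ ≤
          sSup {r : ℝ | ∃ vh : Vh, vh ≠ 0 ∧ r = b (vh : V) (μh : M) / ‖vh‖}) :=
  fortin_criterion_general b Cb hCb Vh Mh β hβ hLBB
end

section
/- Existence and uniqueness of the moment-matching polynomial (classical-derivative version): let k ≥ 1 and let v : ℝⁿ → ℝ be of class C^{k−1} such that every partial derivative D^α v with |α| ≤ k−1 is Lebesgue-integrable on Ω. Then there exists a unique polynomial q in n variables of total degree at most k−1 such that ∫_Ω D^α(v − q)(x) dx = 0 for every multi-index α with |α| ≤ k−1. In particular (uniqueness part): the only polynomial p of total degree at most k−1 with ∫_Ω (D^α p)(x) dx = 0 for all |α| ≤ k−1 is p = 0. -/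
open MeasureTheory

/-- The classical partial derivative in the `i`-th coordinate direction of a function
`f : ℝⁿ → ℝ`. -/
noncomputable def partialDeriv' {n : ℕ} (i : Fin n) (f : (Fin n → ℝ) → ℝ) :
    (Fin n → ℝ) → ℝ :=
  fun x => fderiv ℝ f x (Pi.single i 1)

/-- The iterated partial derivative `D^α f` of `f : ℝⁿ → ℝ` for a multi-index
`α = (α₁, …, αₙ)`, taking `αᵢ` derivatives in the direction `i`. -/
noncomputable def multiDeriv {n : ℕ} (α : Fin n → ℕ) (f : (Fin n → ℝ) → ℝ) :
    (Fin n → ℝ) → ℝ :=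
  (List.finRange n).foldr (fun i g => (partialDeriv' i)^[α i] g) f

/-!
The integrals `∫ ∂^α p` with `|α| ≤ d` depend linearly on a polynomial `p` of degree at most `d`,
and there are exactly as many of them as coefficients of `p`. If `p ≠ 0` and `α` is the exponent
of a monomial of top degree in `p`, then `∂^α p` is the nonzero constant `α! p_α`, whose integral
does not vanish. So the moments determine `p`, and by equality of dimensions every prescribed
family of moments, in particular that of `v`, is attained exactly once.
-/

open MvPolynomial

section FormalDerivatives

variable {σ R : Type*} [CommSemiring R]

theorem commute_pderiv (i j : σ) :
    Commute (pderiv (R := R) i).toLinearMap (pderiv j).toLinearMap := by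
  classical
  refine LinearMap.ext fun p => MvPolynomial.ext _ _ fun m => ?_
  obtain rfl | hij := eq_or_ne i j
  · rfl
  · simp only [Module.End.mul_apply, Derivation.coeFn_coe, coeff_pderiv,
      Finsupp.add_apply, Finsupp.single_eq_of_ne hij, Finsupp.single_eq_of_ne hij.symm, add_zero,
      add_right_comm m, mul_right_comm]

theorem pairwise_commute_pderiv_pow (s : Set σ) (α : σ → ℕ) :
    s.Pairwise (Function.onFun Commute fun i => (pderiv (R := R) i).toLinearMap ^ α i) :=
  fun i _ j _ _ => (commute_pderiv i j).pow_pow (α i) (α j)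

theorem coeff_pderiv_pow (i : σ) (a : ℕ) (m : σ →₀ ℕ) (p : MvPolynomial σ R) :
    coeff m (((pderiv i).toLinearMap ^ a) p) =
      coeff (m + Finsupp.single i a) p * (m i + 1).ascFactorial a := by
  induction a generalizing p with
  | zero => simp
  | succ a ih =>
    rw [pow_succ, Module.End.mul_apply, ih, Nat.ascFactorial_succ, Derivation.coeFn_coe,
      coeff_pderiv, add_assoc, ← Finsupp.single_add]
    simp only [Finsupp.add_apply, Finsupp.single_eq_same]
    push_cast
    ring

theorem coeff_noncommProd_pderiv_pow (s : Finset σ) (α : σ → ℕ) (m : σ →₀ ℕ)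
    (p : MvPolynomial σ R) :
    coeff m (s.noncommProd (fun i => (pderiv i).toLinearMap ^ α i)
        (pairwise_commute_pderiv_pow _ α) p) =
      coeff (m + ∑ i ∈ s, Finsupp.single i (α i)) p * ∏ i ∈ s, (m i + 1).ascFactorial (α i) := by
  classical
  induction s using Finset.induction_on generalizing m with
  | empty => simp
  | insert j s hj ih =>
    have unchanged : ∀ i ∈ s, (m + Finsupp.single j (α j)) i = m i := fun i hi => by
      rw [Finsupp.add_apply, Finsupp.single_eq_of_ne (ne_of_mem_of_not_mem hi hj), add_zero]
    rw [Finset.noncommProd_insert_of_notMem _ _ _ _ hj, Module.End.mul_apply, coeff_pderiv_pow, ih,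
      Finset.sum_insert hj, Finset.prod_insert hj, add_assoc,
      Finset.prod_congr rfl fun i hi => by rw [unchanged i hi]]
    push_cast
    ring

variable [Fintype σ]

/-- The formal iterated partial derivative `∂^α` of polynomials for a multi-index `α`, the
algebraic counterpart of `multiDeriv`. The factors `∂ᵢ^αᵢ` commute, so their order is immaterial. -/
noncomputable def multiPDeriv (α : σ → ℕ) : Module.End R (MvPolynomial σ R) :=
  Finset.univ.noncommProd (fun i => (pderiv i).toLinearMap ^ α i)
    (pairwise_commute_pderiv_pow _ α)

theorem coeff_multiPDeriv (α m : σ →₀ ℕ) (p : MvPolynomial σ R) :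
    coeff m (multiPDeriv α p) = coeff (m + α) p * ∏ i, (m i + 1).ascFactorial (α i) := by
  rw [multiPDeriv, coeff_noncommProd_pderiv_pow, Finsupp.univ_sum_single]

theorem totalDegree_multiPDeriv_le (α : σ → ℕ) (p : MvPolynomial σ R) :
    (multiPDeriv α p).totalDegree ≤ p.totalDegree := by
  obtain ⟨α, rfl⟩ := Finsupp.equivFunOnFinite.surjective α
  refine Finset.sup_le fun m hm => ?_
  have hmα : m + α ∈ p.support := by
    rw [mem_support_iff] at hm ⊢
    exact left_ne_zero_of_mul (coeff_multiPDeriv α m p ▸ hm)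
  calc m.degree ≤ (m + α).degree := Finsupp.degree_mono le_self_add
    _ ≤ p.totalDegree := le_totalDegree hmα

theorem multiPDeriv_eq_C_of_totalDegree_le {α : σ →₀ ℕ} {p : MvPolynomial σ R}
    (hp : p.totalDegree ≤ α.degree) :
    multiPDeriv α p = C (coeff α p * ∏ i, (α i).factorial) := by
  classical
  ext m
  rw [coeff_multiPDeriv, coeff_C]
  split_ifs with hm
  · simp [← hm, Nat.one_ascFactorial]
  · have hdeg : p.totalDegree < (m + α).degree := by
      have : m.degree ≠ 0 := fun h => hm ((Finsupp.degree_eq_zero_iff m).1 h).symm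
      rw [map_add]
      lia
    rw [coeff_eq_zero_of_totalDegree_lt hdeg, zero_mul]

end FormalDerivatives

theorem finrank_restrictTotalDegree (σ R : Type*) [Fintype σ] [CommRing R] [Nontrivial R] (d : ℕ) :
    Module.finrank R (restrictTotalDegree σ R d) = Nat.card {α : σ → ℕ // ∑ i, α i ≤ d} :=
  (Module.finrank_eq_nat_card_basis (basisRestrictSupport R _)).trans <|
    Nat.card_congr <| Finsupp.equivFunOnFinite.subtypeEquiv fun m =>
      iff_of_eq <| congrArg (· ≤ d) m.degree_eq_sum

section MomentMap

variable {σ R K : Type*} [Fintype σ] [CommSemiring R] [Field K] [CharZero K]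

/-- The linear map sending a polynomial `p` of total degree at most `d` to the family of moments
`φ (∂^α p)`, `|α| ≤ d`, of its derivatives with respect to a linear functional `φ`. -/
noncomputable def momentMap (φ : MvPolynomial σ R →ₗ[R] R) (d : ℕ) :
    restrictTotalDegree σ R d →ₗ[R] ({α : σ → ℕ // ∑ i, α i ≤ d} → R) :=
  LinearMap.pi fun α => φ ∘ₗ multiPDeriv α.1 ∘ₗ Submodule.subtype _

theorem eq_zero_of_forall_apply_multiPDeriv_eq_zero [NoZeroDivisors R] [CharZero R]
    {φ : MvPolynomial σ R →ₗ[R] R} (hφ : φ 1 ≠ 0) {p : MvPolynomial σ R}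
    (hp : ∀ α : σ → ℕ, ∑ i, α i ≤ p.totalDegree → φ (multiPDeriv α p) = 0) : p = 0 := by
  by_contra hne
  obtain ⟨α, hα, hdeg⟩ := Finset.exists_mem_eq_sup p.support (support_nonempty.2 hne)
    (fun m => m.sum fun _ e => e)
  have top_derivative : φ (multiPDeriv α p) = coeff α p * (∏ i, (α i).factorial : ℕ) * φ 1 := by
    rw [multiPDeriv_eq_C_of_totalDegree_le hdeg.le, C_eq_smul_one, map_smul, smul_eq_mul]
  have factorial_ne_zero : ((∏ i, (α i).factorial : ℕ) : R) ≠ 0 :=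
    Nat.cast_ne_zero.2 <| Finset.prod_ne_zero_iff.2 fun i _ => (α i).factorial_ne_zero
  refine mul_ne_zero (mul_ne_zero (mem_support_iff.1 hα) factorial_ne_zero) hφ ?_
  rw [← top_derivative]
  exact hp α (α.degree_eq_sum.symm.trans hdeg.symm).le

theorem momentMap_bijective {φ : MvPolynomial σ K →ₗ[K] K} (hφ : φ 1 ≠ 0) (d : ℕ) :
    Function.Bijective (momentMap φ d) := by
  classical
  have : Finite {α : σ → ℕ // ∑ i, α i ≤ d} :=
    (Set.finite_Iic fun _ : σ => d).subset fun α hα i =>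
      (Finset.single_le_sum_of_canonicallyOrdered (Finset.mem_univ i)).trans hα
  have := Fintype.ofFinite {α : σ → ℕ // ∑ i, α i ≤ d}
  have injective : Function.Injective (momentMap φ d) := by
    refine (injective_iff_map_eq_zero _).2 fun p hp => Subtype.ext ?_
    exact eq_zero_of_forall_apply_multiPDeriv_eq_zero hφ fun α hα =>
      congrFun hp ⟨α, hα.trans ((mem_restrictTotalDegree _ _ _).1 p.2)⟩
  have finrank_eq : Module.finrank K (restrictTotalDegree σ K d) =
      Module.finrank K ({α : σ → ℕ // ∑ i, α i ≤ d} → K) := by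
    rw [finrank_restrictTotalDegree, Module.finrank_fintype_fun_eq_card, Nat.card_eq_fintype_card]
  exact ⟨injective,
    (LinearMap.injective_iff_surjective_of_finrank_eq_finrank finrank_eq).1 injective⟩

theorem existsUnique_forall_apply_multiPDeriv_eq {φ : MvPolynomial σ K →ₗ[K] K} (hφ : φ 1 ≠ 0)
    (d : ℕ) (b : (σ → ℕ) → K) :
    ∃! q : MvPolynomial σ K, q.totalDegree ≤ d ∧
      ∀ α : σ → ℕ, ∑ i, α i ≤ d → φ (multiPDeriv α q) = b α := by
  obtain ⟨⟨q, hq⟩, hqb, unique⟩ := (momentMap_bijective hφ d).existsUnique fun α => b α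
  refine ⟨q, ⟨(mem_restrictTotalDegree _ _ _).1 hq, fun α hα => congrFun hqb ⟨α, hα⟩⟩, ?_⟩
  rintro r ⟨hr, hrb⟩
  exact congrArg Subtype.val <|
    unique ⟨r, (mem_restrictTotalDegree _ _ _).2 hr⟩ (funext fun α => hrb α α.2)

end MomentMap

section ClassicalDerivatives

variable {n : ℕ} {f g : (Fin n → ℝ) → ℝ}

theorem contDiff_partialDeriv' {m : WithTop ℕ∞} (i : Fin n) (hf : ContDiff ℝ (m + 1) f) :
    ContDiff ℝ m (partialDeriv' i f) :=
  (hf.fderiv_right le_rfl).clm_apply contDiff_const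

theorem contDiff_iterate_partialDeriv' {m : WithTop ℕ∞} (i : Fin n) (a : ℕ)
    (hf : ContDiff ℝ (m + a) f) : ContDiff ℝ m ((partialDeriv' i)^[a] f) := by
  induction a generalizing f with
  | zero => simpa using hf
  | succ a ih =>
    refine ih (contDiff_partialDeriv' i ?_)
    simpa [add_assoc] using hf

theorem contDiff_foldr_partialDeriv' {m : WithTop ℕ∞} (l : List (Fin n)) (α : Fin n → ℕ)
    (hf : ContDiff ℝ (m + (l.map α).sum) f) :
    ContDiff ℝ m (l.foldr (fun i g => (partialDeriv' i)^[α i] g) f) := by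
  induction l generalizing m with
  | nil => simpa using hf
  | cons i l ih =>
    refine contDiff_iterate_partialDeriv' i (α i) (ih ?_)
    simpa [add_assoc] using hf

theorem partialDeriv'_sub (i : Fin n) (hf : Differentiable ℝ f) (hg : Differentiable ℝ g) :
    partialDeriv' i (f - g) = partialDeriv' i f - partialDeriv' i g := by
  ext x
  simp [partialDeriv', fderiv_sub (hf x) (hg x)]

theorem iterate_partialDeriv'_sub (i : Fin n) (a : ℕ) (hf : ContDiff ℝ a f)
    (hg : ContDiff ℝ a g) :
    (partialDeriv' i)^[a] (f - g) = (partialDeriv' i)^[a] f - (partialDeriv' i)^[a] g := by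
  induction a generalizing f g with
  | zero => rfl
  | succ a ih =>
    simp only [Function.iterate_succ_apply]
    push_cast at hf hg
    rw [partialDeriv'_sub i (hf.differentiable (by simp)) (hg.differentiable (by simp)),
      ih (contDiff_partialDeriv' i hf) (contDiff_partialDeriv' i hg)]

theorem foldr_partialDeriv'_sub (l : List (Fin n)) (α : Fin n → ℕ)
    (hf : ContDiff ℝ (l.map α).sum f) (hg : ContDiff ℝ (l.map α).sum g) :
    l.foldr (fun i h => (partialDeriv' i)^[α i] h) (f - g) =
      l.foldr (fun i h => (partialDeriv' i)^[α i] h) f -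
        l.foldr (fun i h => (partialDeriv' i)^[α i] h) g := by
  induction l with
  | nil => rfl
  | cons i l ih =>
    simp only [List.map_cons, List.sum_cons, Nat.cast_add] at hf hg
    rw [List.foldr_cons, ih (hf.of_le le_add_self) (hg.of_le le_add_self)]
    exact iterate_partialDeriv'_sub i (α i) (contDiff_foldr_partialDeriv' l α hf)
      (contDiff_foldr_partialDeriv' l α hg)

theorem multiDeriv_sub (α : Fin n → ℕ) (hf : ContDiff ℝ (∑ i, α i : ℕ) f)
    (hg : ContDiff ℝ (∑ i, α i : ℕ) g) :
    multiDeriv α (f - g) = multiDeriv α f - multiDeriv α g := by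
  rw [← List.sum_ofFn, List.ofFn_eq_map] at hf hg
  exact foldr_partialDeriv'_sub _ α hf hg

theorem contDiff_eval {σ : Type*} [Fintype σ] (p : MvPolynomial σ ℝ) (m : WithTop ℕ∞) :
    ContDiff ℝ m fun x => eval x p :=
  (AnalyticOnNhd.eval_mvPolynomial p).contDiff

theorem partialDeriv'_eval (i : Fin n) (p : MvPolynomial (Fin n) ℝ) :
    partialDeriv' i (fun x => eval x p) = fun x => eval x (pderiv i p) := by
  have differentiableAt (p : MvPolynomial (Fin n) ℝ) (x : Fin n → ℝ) :
      DifferentiableAt ℝ (fun y => eval y p) x := (contDiff_eval p 1).differentiable (by simp) x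
  ext x
  simp only [partialDeriv']
  induction p using MvPolynomial.induction_on with
  | C a => simp
  | add p q hp hq =>
    simp only [map_add, fderiv_fun_add (differentiableAt p x) (differentiableAt q x),
      add_apply, hp, hq]
  | mul_X p j hp =>
    have hX : HasFDerivAt (fun y : Fin n → ℝ => y j)
      (ContinuousLinearMap.proj (R := ℝ) (φ := fun _ : Fin n => ℝ) j) x := hasFDerivAt_apply j x
    simp only [map_mul, eval_X, fderiv_fun_mul (differentiableAt p x) hX.differentiableAt,
      hX.fderiv, pderiv_mul, pderiv_X, map_add, add_apply, smul_apply, smul_eq_mul,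
      ContinuousLinearMap.proj_apply, hp]
    obtain rfl | hij := eq_or_ne i j
    · simp only [Pi.single_eq_same, map_one]
      ring
    · simp only [Pi.single_eq_of_ne hij.symm, map_zero]
      ring

theorem iterate_partialDeriv'_eval (i : Fin n) (a : ℕ) (p : MvPolynomial (Fin n) ℝ) :
    (partialDeriv' i)^[a] (fun x => eval x p) =
      fun x => eval x (((pderiv i).toLinearMap ^ a) p) := by
  induction a generalizing p with
  | zero => rfl
  | succ a ih =>
    rw [Function.iterate_succ_apply, partialDeriv'_eval, ih, pow_succ]
    rfl

theorem foldr_partialDeriv'_eval (l : List (Fin n)) (α : Fin n → ℕ)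
    (p : MvPolynomial (Fin n) ℝ) :
    l.foldr (fun i g => (partialDeriv' i)^[α i] g) (fun x => eval x p) =
      fun x => eval x ((l.map fun i => (pderiv i).toLinearMap ^ α i).prod p) := by
  induction l with
  | nil => rfl
  | cons i l ih =>
    rw [List.foldr_cons, ih, iterate_partialDeriv'_eval, List.map_cons, List.prod_cons,
      Module.End.mul_apply]

theorem multiPDeriv_eq_prod_finRange {R : Type*} [CommSemiring R] (α : Fin n → ℕ) :
    multiPDeriv (R := R) α =
      ((List.finRange n).map fun i => (pderiv i).toLinearMap ^ α i).prod := by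
  rw [← Finset.noncommProd_toFinset _ _ (pairwise_commute_pderiv_pow _ α)
    (List.nodup_finRange n)]
  exact Finset.noncommProd_congr (List.toFinset_finRange n).symm (fun _ _ => rfl) _

theorem multiDeriv_eval (α : Fin n → ℕ) (p : MvPolynomial (Fin n) ℝ) :
    multiDeriv α (fun x => eval x p) = fun x => eval x (multiPDeriv α p) := by
  rw [multiPDeriv_eq_prod_finRange]
  exact foldr_partialDeriv'_eval _ α p

end ClassicalDerivatives

section Integrals

theorem integral_const_ne_zero {X : Type*} [MeasurableSpace X] {μ : Measure X} (hμ : μ ≠ 0)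
    {c : ℝ} (hc : c ≠ 0) (h : Integrable (fun _ => c) μ) : ∫ _, c ∂μ ≠ 0 := by
  have : IsFiniteMeasure μ := (integrable_const_iff_isFiniteMeasure hc).1 h
  have : NeZero μ := ⟨hμ⟩
  rw [integral_const]
  exact smul_ne_zero measureReal_univ_ne_zero hc

theorem integral_multiDeriv_sub {n : ℕ} {μ : Measure (Fin n → ℝ)} {α : Fin n → ℕ}
    {f g : (Fin n → ℝ) → ℝ} (hf : ContDiff ℝ (∑ i, α i : ℕ) f) (hg : ContDiff ℝ (∑ i, α i : ℕ) g)
    (hfμ : Integrable (multiDeriv α f) μ) (hgμ : Integrable (multiDeriv α g) μ) :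
    ∫ x, multiDeriv α (fun y => f y - g y) x ∂μ =
      ∫ x, multiDeriv α f x ∂μ - ∫ x, multiDeriv α g x ∂μ := by
  rw [← integral_sub hfμ hgμ]
  exact congrArg (integral μ) (multiDeriv_sub α hf hg)

variable {σ : Type*} {μ : Measure (σ → ℝ)}

theorem integrableOn_eval_of_isBounded [Finite σ] [IsFiniteMeasureOnCompacts μ]
    {s : Set (σ → ℝ)} (hs : Bornology.IsBounded s) (p : MvPolynomial σ ℝ) :
    IntegrableOn (fun x => eval x p) s μ := by
  cases nonempty_fintype σ
  exact ((continuous_eval p).continuousOn.integrableOn_compact hs.isCompact_closure).mono_set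
    subset_closure

theorem exists_linearMap_eq_integral_eval {d : ℕ}
    (hμ : ∀ p : MvPolynomial σ ℝ, p.totalDegree ≤ d → Integrable (fun x => eval x p) μ) :
    ∃ φ : MvPolynomial σ ℝ →ₗ[ℝ] ℝ,
      ∀ p : MvPolynomial σ ℝ, p.totalDegree ≤ d → φ p = ∫ x, eval x p ∂μ := by
  have integrable (p : restrictTotalDegree σ ℝ d) : Integrable (fun x => eval x p.1) μ :=
    hμ p.1 ((mem_restrictTotalDegree _ _ _).1 p.2)
  let integralMap : restrictTotalDegree σ ℝ d →ₗ[ℝ] ℝ :=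
    { toFun p := ∫ x, eval x p.1 ∂μ
      map_add' p q := by
        simpa using integral_add (integrable p) (integrable q)
      map_smul' c p := by
        simpa [smul_eval] using integral_const_mul c fun x => eval x p.1 }
  -- Above degree `d` polynomials may fail to be integrable, so `φ` is an arbitrary extension there.
  obtain ⟨φ, hφ⟩ := integralMap.exists_extend
  exact ⟨φ, fun p hp => LinearMap.congr_fun hφ ⟨p, (mem_restrictTotalDegree _ _ _).2 hp⟩⟩

end Integrals

theorem moment_matching_polynomial_general {n d : ℕ} {μ : Measure (Fin n → ℝ)} (hμ : μ ≠ 0)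
    (hpoly : ∀ p : MvPolynomial (Fin n) ℝ, p.totalDegree ≤ d → Integrable (fun x => eval x p) μ)
    {v : (Fin n → ℝ) → ℝ} (hv : ContDiff ℝ d v)
    (hint : ∀ α : Fin n → ℕ, ∑ i, α i ≤ d → Integrable (multiDeriv α v) μ) :
    (∃! q : MvPolynomial (Fin n) ℝ, q.totalDegree ≤ d ∧
      ∀ α : Fin n → ℕ, ∑ i, α i ≤ d →
        ∫ x, multiDeriv α (fun y => v y - eval y q) x ∂μ = 0) ∧
    ∀ p : MvPolynomial (Fin n) ℝ, p.totalDegree ≤ d →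
      (∀ α : Fin n → ℕ, ∑ i, α i ≤ d → ∫ x, multiDeriv α (fun y => eval y p) x ∂μ = 0) →
      p = 0 := by
  obtain ⟨φ, hφ⟩ := exists_linearMap_eq_integral_eval hpoly
  have φ_one : φ 1 ≠ 0 := by
    have integrable_one := hpoly 1 (by simp)
    rw [hφ 1 (by simp)]
    simp only [map_one] at integrable_one ⊢
    exact integral_const_ne_zero hμ one_ne_zero integrable_one
  have φ_multiPDeriv {p : MvPolynomial (Fin n) ℝ} (hp : p.totalDegree ≤ d) (α : Fin n → ℕ) :
      φ (multiPDeriv α p) = ∫ x, multiDeriv α (fun y => eval y p) x ∂μ := by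
    rw [multiDeriv_eval, hφ _ ((totalDegree_multiPDeriv_le α p).trans hp)]
  refine ⟨?_, fun p hp h => ?_⟩
  · refine (existsUnique_congr fun q => and_congr_right fun hq => forall₂_congr fun α hα => ?_).1
      (existsUnique_forall_apply_multiPDeriv_eq φ_one d fun α => ∫ x, multiDeriv α v x ∂μ)
    have hqμ : Integrable (multiDeriv α fun y => eval y q) μ := by
      rw [multiDeriv_eval]
      exact hpoly _ ((totalDegree_multiPDeriv_le α q).trans hq)
    rw [φ_multiPDeriv hq, integral_multiDeriv_sub (hv.of_le (mod_cast hα)) (contDiff_eval q _)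
      (hint α hα) hqμ, sub_eq_zero, eq_comm]
  · exact eq_zero_of_forall_apply_multiPDeriv_eq_zero φ_one fun α hα =>
      (φ_multiPDeriv hp α).trans (h α (hα.trans hp))

/-- **Existence and uniqueness of the moment-matching polynomial.** Let `Ω ⊆ ℝⁿ` be a
nonempty bounded open set, `k ≥ 1`, and `v : ℝⁿ → ℝ` of class `C^{k−1}` such that
every partial derivative `D^α v` with `|α| ≤ k−1` is integrable on `Ω`. Then there is
a unique polynomial `q` of total degree at most `k−1` with
`∫_Ω D^α(v − q) = 0` for all `|α| ≤ k−1`; in particular the only polynomial `p` of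
total degree at most `k−1` with `∫_Ω D^α p = 0` for all `|α| ≤ k−1` is `p = 0`. -/
theorem moment_matching_polynomial
    {n k : ℕ} (hk : 1 ≤ k)
    (Ω : Set (Fin n → ℝ)) (hΩne : Ω.Nonempty) (hΩopen : IsOpen Ω)
    (hΩbdd : Bornology.IsBounded Ω)
    (v : (Fin n → ℝ) → ℝ) (hv : ContDiff ℝ ((k - 1 : ℕ) : ℕ∞) v)
    (hint : ∀ α : Fin n → ℕ, (∑ i, α i) ≤ k - 1 →
      IntegrableOn (multiDeriv α v) Ω volume) :
    (∃! q : MvPolynomial (Fin n) ℝ, q.totalDegree ≤ k - 1 ∧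
      ∀ α : Fin n → ℕ, (∑ i, α i) ≤ k - 1 →
        ∫ x in Ω, multiDeriv α (fun y => v y - MvPolynomial.eval y q) x = 0) ∧
    (∀ p : MvPolynomial (Fin n) ℝ, p.totalDegree ≤ k - 1 →
      (∀ α : Fin n → ℕ, (∑ i, α i) ≤ k - 1 →
        ∫ x in Ω, multiDeriv α (fun y => MvPolynomial.eval y p) x = 0) →
      p = 0) := by
  exact moment_matching_polynomial_general
    (Measure.restrict_eq_zero.not.2 (hΩopen.measure_pos volume hΩne).ne')
    (fun p _ => integrableOn_eval_of_isBounded hΩbdd p) hv hint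
end
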